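/- arXiv:0807.3898 — 4 statements merged into one kernel-verified Lean document; each statement's English description precedes it below -/
import Mathlib

section
/- Let κ, θ, σ > 0 and set ν := 2κθ/σ². Define G(x) := ∫ₓ^∞ π_{ν,θ}(y)/y dy and f(x) := G(x)/π_{ν,θ}(x) for x > 0. Then f is twice continuously differentiable on (0,∞) and satisfies the eigenvalue equation (σ²/2)·x·f''(x) + κ(θ − x)·f'(x) = κ·f(x) for all x > 0. In particular, for any ε > 0 the function x ↦ π_{ν,θ}(ε)·G(x)/(G(ε)·π_{ν,θ}(x)) also satisfies this equation and takes the value 1 at x = ε. -/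
/-!
The Gamma density satisfies Pearson's equation `x π' = (ν - 1 - (ν/θ) x) π`, and `G' = -π/x`, so
the quotient `f = G/π` satisfies the first-order equation `x f' = (1 - ν + (ν/θ) x) f - 1`, whose
coefficients are smooth on `x > 0`; hence so is `f`. Differentiating it removes the inhomogeneous
term and leaves Kummer's equation `x f'' + (ν - (ν/θ) x) f' = (ν/θ) f`, which is the eigenvalue
equation divided by `σ²/2`.
-/

open Real MeasureTheory Set

/-- Gamma density with shape `ν` and rate `ν/θ`. -/
noncomputable def piDens (ν θ x : ℝ) : ℝ :=
  ((ν / θ) ^ ν / Real.Gamma ν) * x ^ (ν - 1) * Real.exp (-ν * x / θ)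

/-- The function `G(x) = ∫ₓ^∞ π_{ν,θ}(y)/y dy`. -/
noncomputable def Gfun (ν θ x : ℝ) : ℝ :=
  ∫ y in Set.Ioi x, piDens ν θ y / y

theorem hasDerivAt_integral_Ioi {E : Type*} [NormedAddCommGroup E] [NormedSpace ℝ E]
    [CompleteSpace E] {f : ℝ → E} {a x : ℝ} (hf : IntegrableOn f (Ioi a)) (hax : a < x)
    (hfx : ContinuousAt f x) : HasDerivAt (fun y ↦ ∫ t in Ioi y, f t) (-f x) x := by
  have hint : HasDerivAt (fun y ↦ ∫ t in a..y, f t) (f x) x :=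
    intervalIntegral.integral_hasDerivAt_right
      ((intervalIntegrable_iff_integrableOn_Ioc_of_le hax.le).2
        (hf.mono_set Ioc_subset_Ioi_self))
      ⟨Ioi a, Ioi_mem_nhds hax, hf.aestronglyMeasurable⟩ hfx
  refine (hint.const_sub (∫ t in Ioi a, f t)).congr_of_eventuallyEq ?_
  filter_upwards [Ioi_mem_nhds hax] with y hy
  rw [← intervalIntegral.integral_Ioi_sub_Ioi hf (le_of_lt hy), sub_sub_cancel]

theorem setIntegral_pos_of_forall_pos {α : Type*} [MeasurableSpace α] {μ : Measure α} {s : Set α}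
    {f : α → ℝ} (hs : MeasurableSet s) (hμs : μ s ≠ 0) (hf : IntegrableOn f s μ)
    (hpos : ∀ x ∈ s, 0 < f x) : 0 < ∫ x in s, f x ∂μ := by
  have hsupp : Function.support f ∩ s = s := inter_eq_right.2 fun x hx ↦ (hpos x hx).ne'
  rw [setIntegral_pos_iff_support_of_nonneg_ae
    (ae_restrict_of_forall_mem hs fun x hx ↦ (hpos x hx).le) hf, hsupp]
  exact pos_iff_ne_zero.2 hμs

theorem integrableOn_Ioi_rpow_mul_exp_neg_mul {a b : ℝ} (s : ℝ) (ha : 0 < a) (hb : 0 < b) :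
    IntegrableOn (fun x ↦ x ^ s * exp (-b * x)) (Ioi a) := by
  have hcont : ContinuousOn (fun x ↦ x ^ s * exp (-b * x)) (Ici a) :=
    (continuousOn_id.rpow_const fun x hx ↦ Or.inl (ha.trans_le hx).ne').mul (by fun_prop)
  refine integrable_of_isBigO_exp_neg (half_pos hb) hcont ?_
  calc (fun x ↦ x ^ s * exp (-b * x))
      =O[Filter.atTop] fun x ↦ exp (b / 2 * x) * exp (-b * x) :=
        (isLittleO_rpow_exp_pos_mul_atTop s (half_pos hb)).isBigO.mul
          (Asymptotics.isBigO_refl _ _)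
    _ = fun x ↦ exp (-(b / 2) * x) := by
        ext x
        rw [← exp_add]
        ring_nf

section GammaWeight

variable {ν θ x : ℝ}

theorem piDens_ne_zero (hrate : 0 < ν / θ) (hν : ∀ m : ℕ, ν ≠ -m) (hx : 0 < x) :
    piDens ν θ x ≠ 0 := by
  have hΓ : Gamma ν ≠ 0 := Gamma_ne_zero hν
  unfold piDens
  positivity

theorem hasDerivAt_piDens (hx : x ≠ 0) :
    HasDerivAt (piDens ν θ) (((ν - 1) / x - ν / θ) * piDens ν θ x) x := by
  have hpow : HasDerivAt (fun y ↦ y ^ (ν - 1)) ((ν - 1) * x ^ (ν - 1 - 1)) x :=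
    hasDerivAt_rpow_const (Or.inl hx)
  have hexp : HasDerivAt (fun y ↦ exp (-ν * y / θ)) (exp (-ν * x / θ) * (-ν * 1 / θ)) x :=
    (((hasDerivAt_id x).const_mul (-ν)).div_const θ).exp
  refine HasDerivAt.congr_deriv (f := piDens ν θ)
    ((hpow.const_mul ((ν / θ) ^ ν / Gamma ν)).mul hexp) ?_
  rw [rpow_sub_one hx (ν - 1), piDens]
  ring

theorem piDens_div_self_eq (hx : x ≠ 0) :
    piDens ν θ x / x = (ν / θ) ^ ν / Gamma ν * (x ^ (ν - 2) * exp (-(ν / θ) * x)) := by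
  have hpow : x ^ (ν - 2) = x ^ (ν - 1) / x := by
    rw [← rpow_sub_one hx]
    ring_nf
  rw [piDens, hpow, show -ν * x / θ = -(ν / θ) * x by ring]
  ring

theorem integrableOn_piDens_div_self (hrate : 0 < ν / θ) (hx : 0 < x) :
    IntegrableOn (fun y ↦ piDens ν θ y / y) (Ioi x) :=
  IntegrableOn.congr_fun
    ((integrableOn_Ioi_rpow_mul_exp_neg_mul (ν - 2) hx hrate).const_mul _)
    (fun _ hy ↦ (piDens_div_self_eq (hx.trans hy).ne').symm) measurableSet_Ioi

theorem Gfun_ne_zero (hrate : 0 < ν / θ) (hν : ∀ m : ℕ, ν ≠ -m) (hx : 0 < x) :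
    Gfun ν θ x ≠ 0 := by
  have hfactor : Gfun ν θ x =
      (ν / θ) ^ ν / Gamma ν * ∫ y in Ioi x, y ^ (ν - 2) * exp (-(ν / θ) * y) := by
    rw [Gfun, ← integral_const_mul]
    exact setIntegral_congr_fun measurableSet_Ioi
      fun y hy ↦ piDens_div_self_eq (hx.trans hy).ne'
  have hint : 0 < ∫ y in Ioi x, y ^ (ν - 2) * exp (-(ν / θ) * y) := by
    refine setIntegral_pos_of_forall_pos measurableSet_Ioi (by simp)
      (integrableOn_Ioi_rpow_mul_exp_neg_mul (ν - 2) hx hrate) fun y hy ↦ ?_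
    have hy_pos : 0 < y := hx.trans hy
    positivity
  have hΓ : Gamma ν ≠ 0 := Gamma_ne_zero hν
  rw [hfactor]
  positivity

theorem hasDerivAt_Gfun (hrate : 0 < ν / θ) (hx : 0 < x) :
    HasDerivAt (Gfun ν θ) (-(piDens ν θ x / x)) x :=
  hasDerivAt_integral_Ioi (integrableOn_piDens_div_self hrate (half_pos hx)) (half_lt_self hx)
    ((hasDerivAt_piDens hx.ne').continuousAt.div continuousAt_id hx.ne')

theorem hasDerivAt_Gfun_div_piDens (hrate : 0 < ν / θ) (hν : ∀ m : ℕ, ν ≠ -m) (hx : 0 < x) :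
    HasDerivAt (fun y ↦ Gfun ν θ y / piDens ν θ y)
      (((1 - ν + ν / θ * x) * (Gfun ν θ x / piDens ν θ x) - 1) / x) x := by
  have hp : piDens ν θ x ≠ 0 := piDens_ne_zero hrate hν hx
  refine ((hasDerivAt_Gfun hrate hx).div (hasDerivAt_piDens hx.ne') hp).congr_deriv ?_
  field_simp
  ring

end GammaWeight

theorem contDiffOn_of_hasDerivAt_of_isOpen {E : Type*} [NormedAddCommGroup E] [NormedSpace ℝ E]
    [CompleteSpace E] {n : ℕ∞} {v : ℝ → E → E} {g : ℝ → E} {s : Set ℝ} (hs : IsOpen s)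
    (hv : ContDiffOn ℝ n (Function.uncurry v) (s ×ˢ univ))
    (hg : ∀ x ∈ s, HasDerivAt g (v x (g x)) x) : ContDiffOn ℝ n g s := by
  intro x hx
  obtain ⟨l, r, -, hnhds, hsub⟩ := exists_Icc_mem_subset_of_mem_nhds (hs.mem_nhds hx)
  have hIcc : ContDiffOn ℝ n g (Icc l r) :=
    ODE.contDiffOn_enat_Icc_of_hasDerivWithinAt (hv.mono (prod_mono_left hsub))
      (fun y hy ↦ (hg y (hsub hy)).hasDerivWithinAt) (mapsTo_univ _ _)
  exact (hIcc.contDiffAt hnhds).contDiffWithinAt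

section FirstOrderEquation

variable {f : ℝ → ℝ} {a b c : ℝ}

theorem contDiffOn_of_hasDerivAt_affine_div {n : ℕ∞}
    (hf : ∀ x > 0, HasDerivAt f (((1 - a + b * x) * f x - c) / x) x) :
    ContDiffOn ℝ n f (Ioi 0) := by
  refine contDiffOn_of_hasDerivAt_of_isOpen (v := fun x y ↦ ((1 - a + b * x) * y - c) / x)
    isOpen_Ioi ?_ hf
  exact ContDiffOn.div (by fun_prop) contDiffOn_fst fun p hp ↦ ne_of_gt hp.1

theorem kummer_equation_of_hasDerivAt_affine_div
    (hf : ∀ x > 0, HasDerivAt f (((1 - a + b * x) * f x - c) / x) x) {x : ℝ} (hx : 0 < x) :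
    x * deriv (deriv f) x + (a - b * x) * deriv f x = b * f x := by
  have hf_x : HasDerivAt f (deriv f x) x := (hf x hx).differentiableAt.hasDerivAt
  have hf'_x : HasDerivAt (deriv f) (deriv (deriv f) x) x := by
    have hquot : DifferentiableAt ℝ (fun y ↦ ((1 - a + b * y) * f y - c) / y) x := by
      have hf_diff : DifferentiableAt ℝ f x := hf_x.differentiableAt
      fun_prop (disch := exact hx.ne')
    refine (hquot.congr_of_eventuallyEq ?_).hasDerivAt
    filter_upwards [Ioi_mem_nhds hx] with y hy using (hf y hy).deriv
  have hfirst : (fun y ↦ y * deriv f y) =ᶠ[nhds x] fun y ↦ (1 - a + b * y) * f y - c := by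
    filter_upwards [Ioi_mem_nhds hx] with y hy
    rw [(hf y hy).deriv, mul_div_cancel₀ _ (ne_of_gt hy)]
  have hlhs := (hasDerivAt_id x).mul hf'_x
  have hrhs := ((((hasDerivAt_id x).const_mul b).const_add (1 - a)).mul hf_x).sub_const c
  have hderiv := hlhs.unique (hrhs.congr_of_eventuallyEq hfirst)
  simp only [id] at hderiv
  linear_combination hderiv

end FirstOrderEquation

section Generator

/-- The CIR generator `L f(x) = (σ²/2) x f''(x) + κ(θ − x) f'(x)`, with `deriv` for the
derivatives, so that its values are meaningful only where `f` is twice differentiable. -/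
noncomputable def cirGenerator (κ θ σ : ℝ) (f : ℝ → ℝ) (x : ℝ) : ℝ :=
  σ ^ 2 / 2 * x * deriv (deriv f) x + κ * (θ - x) * deriv f x

variable {κ θ σ : ℝ}

theorem cirGenerator_const_mul (C : ℝ) (f : ℝ → ℝ) (x : ℝ) :
    cirGenerator κ θ σ (fun y ↦ C * f y) x = C * cirGenerator κ θ σ f x := by
  have hderiv : deriv (fun y ↦ C * f y) = fun y ↦ C * deriv f y :=
    funext fun y ↦ deriv_const_mul_field C
  rw [cirGenerator, hderiv, deriv_const_mul_field, cirGenerator]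
  ring

theorem cirGenerator_eq_mul_self_of_hasDerivAt {f : ℝ → ℝ} {c x : ℝ} (hσ : σ ≠ 0)
    (hf : ∀ x > 0, HasDerivAt f
      (((1 - 2 * κ * θ / σ ^ 2 + 2 * κ / σ ^ 2 * x) * f x - c) / x) x) (hx : 0 < x) :
    cirGenerator κ θ σ f x = κ * f x := by
  have hkummer := kummer_equation_of_hasDerivAt_affine_div hf hx
  have hshape : σ ^ 2 / 2 * (2 * κ * θ / σ ^ 2) = κ * θ := by field_simp
  have hrate : σ ^ 2 / 2 * (2 * κ / σ ^ 2) = κ := by field_simp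
  rw [cirGenerator]
  linear_combination σ ^ 2 / 2 * hkummer - deriv f x * hshape + (x * deriv f x + f x) * hrate

end Generator

open scoped ContDiff in
theorem cir_eigenfunction_general
    (κ θ σ ν : ℝ) (hκ : 0 < κ) (hν : ν = 2 * κ * θ / σ ^ 2) (hν_pole : ∀ m : ℕ, ν ≠ -m)
    (f : ℝ → ℝ) (hf : ∀ x, f x = Gfun ν θ x / piDens ν θ x) :
    ContDiffOn ℝ ∞ f (Ioi 0) ∧
    (∀ x > 0, cirGenerator κ θ σ f x = κ * f x) ∧
    ∀ ε > 0,
      (∀ x > 0,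
        cirGenerator κ θ σ
            (fun y ↦ piDens ν θ ε * Gfun ν θ y / (Gfun ν θ ε * piDens ν θ y)) x
          = κ * (piDens ν θ ε * Gfun ν θ x / (Gfun ν θ ε * piDens ν θ x))) ∧
      piDens ν θ ε * Gfun ν θ ε / (Gfun ν θ ε * piDens ν θ ε) = 1 := by
  have hν_ne : ν ≠ 0 := by simpa using hν_pole 0
  have hθ : θ ≠ 0 := by rintro rfl; simp [hν] at hν_ne
  have hσ : σ ≠ 0 := by rintro rfl; simp [hν] at hν_ne
  have hrate_eq : ν / θ = 2 * κ / σ ^ 2 := by rw [hν]; field_simp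
  have hrate : 0 < ν / θ := by rw [hrate_eq]; positivity
  have hderiv : ∀ x > 0, HasDerivAt f (((1 - ν + ν / θ * x) * f x - 1) / x) x := by
    rw [funext hf]
    exact fun x ↦ hasDerivAt_Gfun_div_piDens hrate hν_pole
  have heigen : ∀ x > 0, cirGenerator κ θ σ f x = κ * f x := fun x ↦
    cirGenerator_eq_mul_self_of_hasDerivAt hσ (by rwa [hrate_eq, hν] at hderiv)
  refine ⟨contDiffOn_of_hasDerivAt_affine_div hderiv, heigen, fun ε hε ↦ ⟨fun x hx ↦ ?_, ?_⟩⟩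
  · simp only [mul_div_mul_comm, ← hf]
    rw [cirGenerator_const_mul, heigen x hx, mul_left_comm]
  · rw [mul_comm, div_self (mul_ne_zero (Gfun_ne_zero hrate hν_pole hε)
      (piDens_ne_zero hrate hν_pole hε))]

theorem cir_eigenfunction
    (κ θ σ ν : ℝ) (hκ : 0 < κ) (hθ : 0 < θ) (hσ : 0 < σ)
    (hν : ν = 2 * κ * θ / σ ^ 2)
    (f : ℝ → ℝ) (hf : ∀ x, f x = Gfun ν θ x / piDens ν θ x) :
    ContDiffOn ℝ 2 f (Set.Ioi 0) ∧
    (∀ x > (0:ℝ),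
      σ ^ 2 / 2 * x * deriv (deriv f) x + κ * (θ - x) * deriv f x = κ * f x) ∧
    (∀ ε > (0:ℝ),
      (∀ x > (0:ℝ),
        σ ^ 2 / 2 * x
            * deriv (deriv (fun y =>
                piDens ν θ ε * Gfun ν θ y / (Gfun ν θ ε * piDens ν θ y))) x
          + κ * (θ - x)
            * deriv (fun y =>
                piDens ν θ ε * Gfun ν θ y / (Gfun ν θ ε * piDens ν θ y)) x
          = κ * (piDens ν θ ε * Gfun ν θ x / (Gfun ν θ ε * piDens ν θ x))) ∧
      piDens ν θ ε * Gfun ν θ ε / (Gfun ν θ ε * piDens ν θ ε) = 1) := by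
  have hν_pos : 0 < ν := by rw [hν]; positivity
  obtain ⟨hsmooth, heigen⟩ := cir_eigenfunction_general κ θ σ ν hκ hν
    (fun m ↦ ((neg_nonpos.2 m.cast_nonneg).trans_lt hν_pos).ne') f hf
  exact ⟨contDiffOn_infty.1 hsmooth 2, heigen⟩
end

section
/- Let κ, θ, σ > 0, set ν := 2κθ/σ², let G(x) := ∫ₓ^∞ π_{ν,θ}(y)/y dy, and define Φ(ε) := κ·∫₀^ε π_{ν,θ}(x) dx + (σ²/2)·π_{ν,θ}(ε)²/G(ε) + (σ²/2)·π_{ν,θ}(ε)·(ν − 1 − νε/θ) for ε > 0. If ν ≥ 1, then Φ(ε) tends to 0 as ε tends to 0 from the right. (This is the statement that for ν ≥ 1 the capacity of the origin vanishes, i.e. the origin is polar for the univariate CIR process.) -/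
open Real MeasureTheory Set Filter

/-!
Only the middle term of `Φ` needs an argument: there both `π(ε)²` and `1 / G(ε)` are controlled by
the right limit `c ≥ 0` of the density `π` at the origin. If `c > 0` (the case `ν = 1`), then
`π(y) / y ≥ (c / 2) / y` near `0`, so `G` diverges at least logarithmically while `π²` stays
bounded. If `c = 0` (the case `ν > 1`), then `π²` vanishes while `G` increases as `ε` decreases.
-/

open scoped Topology

lemma setIntegral_mono_set_of_nonneg_on {X : Type*} [MeasurableSpace X] {μ : Measure X}
    {g : X → ℝ} {s t : Set X} (ht : MeasurableSet t) (hg : ∀ x ∈ t, 0 ≤ g x)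
    (hgi : IntegrableOn g t μ) (hst : s ⊆ t) : ∫ x in s, g x ∂μ ≤ ∫ x in t, g x ∂μ :=
  setIntegral_mono_set hgi (ae_restrict_of_forall_mem ht hg) hst.eventuallyLE

section WeightedTail

variable {f g : ℝ → ℝ} {a b c : ℝ}

lemma integrableOn_div_id_Ioi (ha : 0 < a) (hf : IntegrableOn f (Ioi a)) :
    IntegrableOn (fun y ↦ f y / y) (Ioi a) := by
  simp only [div_eq_mul_inv]
  refine Integrable.mul_bdd (c := a⁻¹) hf measurable_inv.aestronglyMeasurable ?_
  refine ae_restrict_of_forall_mem measurableSet_Ioi fun y (hy : a < y) ↦ ?_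
  rw [norm_inv, norm_of_nonneg (ha.trans hy).le]
  exact inv_anti₀ ha hy.le

lemma mul_log_div_le_setIntegral_Ioi (ha : 0 < a) (hab : a ≤ b)
    (hg : ∀ y, a < y → 0 ≤ g y) (hgi : IntegrableOn g (Ioi a))
    (hcg : ∀ y ∈ Ioc a b, c * y⁻¹ ≤ g y) :
    c * log (b / a) ≤ ∫ y in Ioi a, g y := by
  have inv_integrable : IntegrableOn (fun y : ℝ ↦ c * y⁻¹) (Ioc a b) :=
    (intervalIntegrable_iff_integrableOn_Ioc_of_le hab).1
      ((intervalIntegrable_inv_iff.2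
        (.inr (notMem_uIcc_of_lt ha (ha.trans_le hab)))).const_mul c)
  calc c * log (b / a)
      = ∫ y in Ioc a b, c * y⁻¹ := by
        rw [← intervalIntegral.integral_of_le hab, intervalIntegral.integral_const_mul,
          integral_inv_of_pos ha (ha.trans_le hab)]
    _ ≤ ∫ y in Ioc a b, g y :=
        setIntegral_mono_on inv_integrable (hgi.mono_set Ioc_subset_Ioi_self) measurableSet_Ioc hcg
    _ ≤ ∫ y in Ioi a, g y :=
        setIntegral_mono_set_of_nonneg_on measurableSet_Ioi hg hgi Ioc_subset_Ioi_self

lemma tendsto_setIntegral_Ioi_div_atTop (hf : ∀ y, 0 < y → 0 ≤ f y)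
    (hfi : ∀ x, 0 < x → IntegrableOn (fun y ↦ f y / y) (Ioi x))
    (hc : 0 < c) (hfc : Tendsto f (𝓝[>] 0) (𝓝 c)) :
    Tendsto (fun x ↦ ∫ y in Ioi x, f y / y) (𝓝[>] 0) atTop := by
  obtain ⟨b, hb : 0 < b, hfb⟩ : ∃ b ∈ Ioi (0 : ℝ), Ioc 0 b ⊆ {y | c / 2 ≤ f y} :=
    mem_nhdsGT_iff_exists_Ioc_subset.1 (hfc.eventually_const_le (half_lt_self hc))
  have log_atTop : Tendsto (fun x ↦ c / 2 * log (b / x)) (𝓝[>] 0) atTop :=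
    (tendsto_log_atTop.comp (tendsto_inv_nhdsGT_zero.const_mul_atTop hb)).const_mul_atTop
      (half_pos hc)
  refine tendsto_atTop_mono' _ ?_ log_atTop
  filter_upwards [Ioc_mem_nhdsGT hb] with x ⟨hx, hxb⟩
  refine mul_log_div_le_setIntegral_Ioi hx hxb
    (fun y hy ↦ div_nonneg (hf y (hx.trans hy)) (hx.trans hy).le) (hfi x hx) fun y hy ↦ ?_
  have hy0 : 0 < y := hx.trans hy.1
  rw [div_eq_mul_inv (f y)]
  exact mul_le_mul_of_nonneg_right (hfb ⟨hy0, hy.2⟩) (inv_nonneg.2 hy0.le)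

theorem tendsto_sq_div_setIntegral_Ioi_div_zero (hf : ∀ y, 0 < y → 0 ≤ f y)
    (hfi : ∀ x, 0 < x → IntegrableOn (fun y ↦ f y / y) (Ioi x))
    (ha : 0 < a) (tail_pos : 0 < ∫ y in Ioi a, f y / y) (hfc : Tendsto f (𝓝[>] 0) (𝓝 c)) :
    Tendsto (fun x ↦ f x ^ 2 / ∫ y in Ioi x, f y / y) (𝓝[>] 0) (𝓝 0) := by
  have hc : 0 ≤ c := ge_of_tendsto hfc (eventually_mem_nhdsWithin.mono hf)
  rcases hc.eq_or_lt' with rfl | hc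
  · have sq_div_zero : Tendsto (fun x ↦ f x ^ 2 / ∫ y in Ioi a, f y / y) (𝓝[>] 0) (𝓝 0) := by
      simpa using (hfc.pow 2).div_const (∫ y in Ioi a, f y / y)
    have tail_le : ∀ᶠ x in 𝓝[>] 0, ∫ y in Ioi a, f y / y ≤ ∫ y in Ioi x, f y / y := by
      filter_upwards [Ioc_mem_nhdsGT ha] with x ⟨hx, hxa⟩
      exact setIntegral_mono_set_of_nonneg_on measurableSet_Ioi
        (fun y hy ↦ div_nonneg (hf y (hx.trans hy)) (hx.trans hy).le) (hfi x hx)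
        (Ioi_subset_Ioi hxa)
    refine squeeze_zero' ?_ ?_ sq_div_zero
    · filter_upwards [tail_le] with x hx
      exact div_nonneg (sq_nonneg _) (tail_pos.trans_le hx).le
    · filter_upwards [tail_le] with x hx
      exact div_le_div_of_nonneg_left (sq_nonneg _) tail_pos hx
  · exact (hfc.pow 2).div_atTop (tendsto_setIntegral_Ioi_div_atTop hf hfi hc hfc)

end WeightedTail

section GammaDensity

variable {ν θ x : ℝ}

lemma continuous_piDens (hν : 1 ≤ ν) : Continuous (piDens ν θ) := by
  have := continuous_rpow_const (sub_nonneg.2 hν)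
  unfold piDens
  fun_prop

lemma piDens_pos (hν : 0 < ν) (hθ : 0 < θ) (hx : 0 < x) : 0 < piDens ν θ x := by
  unfold piDens
  positivity

lemma integrableOn_piDens_Ioi (hν : 0 < ν) (hθ : 0 < θ) : IntegrableOn (piDens ν θ) (Ioi 0) := by
  have kernel_integrable :=
    integrableOn_rpow_mul_exp_neg_mul_rpow (by linarith : -1 < ν - 1) one_pos (div_pos hν hθ)
  refine IntegrableOn.congr_fun (kernel_integrable.const_mul ((ν / θ) ^ ν / Real.Gamma ν))
    (fun x _ ↦ ?_) measurableSet_Ioi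
  simp only [piDens, rpow_one]
  ring_nf

lemma integrableOn_piDens_div_id_Ioi (hν : 0 < ν) (hθ : 0 < θ) (hx : 0 < x) :
    IntegrableOn (fun y ↦ piDens ν θ y / y) (Ioi x) :=
  integrableOn_div_id_Ioi hx ((integrableOn_piDens_Ioi hν hθ).mono_set (Ioi_subset_Ioi hx.le))

lemma Gfun_pos (hν : 0 < ν) (hθ : 0 < θ) (hx : 0 < x) : 0 < Gfun ν θ x := by
  have integrand_pos : ∀ y ∈ Ioi x, 0 < piDens ν θ y / y := fun y hy ↦
    div_pos (piDens_pos hν hθ (hx.trans hy)) (hx.trans hy)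
  refine (setIntegral_pos_iff_support_of_nonneg_ae
    (ae_restrict_of_forall_mem measurableSet_Ioi fun y hy ↦ (integrand_pos y hy).le)
    (integrableOn_piDens_div_id_Ioi hν hθ hx)).2 ?_
  have subset_support : Ioi x ⊆ Function.support fun y ↦ piDens ν θ y / y := fun y hy ↦
    (integrand_pos y hy).ne'
  rw [inter_eq_right.2 subset_support, Real.volume_Ioi]
  exact ENNReal.zero_lt_top

lemma piDens_zero_mul_sub_one : piDens ν θ 0 * (ν - 1) = 0 := by
  by_cases hν : ν - 1 = 0
  · rw [hν, mul_zero]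
  · simp only [piDens, zero_rpow hν, mul_zero, zero_mul]

lemma tendsto_integral_piDens_zero (hν : 1 ≤ ν) :
    Tendsto (fun ε ↦ ∫ x in (0 : ℝ)..ε, piDens ν θ x) (𝓝 0) (𝓝 0) := by
  simpa only [intervalIntegral.integral_same] using
    (intervalIntegral.continuous_primitive
      (fun a b ↦ (continuous_piDens hν).intervalIntegrable a b) 0).tendsto 0

lemma tendsto_piDens_sq_div_Gfun_zero (hν : 1 ≤ ν) (hθ : 0 < θ) :
    Tendsto (fun ε ↦ piDens ν θ ε ^ 2 / Gfun ν θ ε) (𝓝[>] 0) (𝓝 0) :=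
  have hν0 : 0 < ν := one_pos.trans_le hν
  tendsto_sq_div_setIntegral_Ioi_div_zero (fun _ hy ↦ (piDens_pos hν0 hθ hy).le)
    (fun _ hx ↦ integrableOn_piDens_div_id_Ioi hν0 hθ hx) one_pos (Gfun_pos hν0 hθ one_pos)
    (continuous_piDens hν).continuousWithinAt.tendsto

lemma tendsto_piDens_mul_drift_zero (hν : 1 ≤ ν) :
    Tendsto (fun ε ↦ piDens ν θ ε * (ν - 1 - ν * ε / θ)) (𝓝 0) (𝓝 0) := by
  have := continuous_piDens (θ := θ) hν
  have hcont : Continuous fun ε ↦ piDens ν θ ε * (ν - 1 - ν * ε / θ) := by fun_prop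
  simpa only [mul_zero, zero_div, sub_zero, piDens_zero_mul_sub_one] using hcont.tendsto 0

end GammaDensity

theorem cir_capacity_origin_vanishes
    (κ θ σ ν : ℝ) (hκ : 0 < κ) (hθ : 0 < θ) (hσ : 0 < σ)
    (hν : ν = 2 * κ * θ / σ ^ 2) (hν1 : 1 ≤ ν)
    (Φ : ℝ → ℝ)
    (hΦ : ∀ ε > (0:ℝ),
      Φ ε = κ * (∫ x in (0:ℝ)..ε, piDens ν θ x)
        + σ ^ 2 / 2 * (piDens ν θ ε) ^ 2 / Gfun ν θ ε
        + σ ^ 2 / 2 * piDens ν θ ε * (ν - 1 - ν * ε / θ)) :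
    Filter.Tendsto Φ (nhdsWithin 0 (Set.Ioi 0)) (nhds 0) := by
  have mass := ((tendsto_integral_piDens_zero (θ := θ) hν1).const_mul κ).mono_left
    (nhdsWithin_le_nhds (s := Ioi 0))
  have energy := (tendsto_piDens_sq_div_Gfun_zero hν1 hθ).const_mul (σ ^ 2 / 2)
  have boundary := ((tendsto_piDens_mul_drift_zero (θ := θ) hν1).const_mul (σ ^ 2 / 2)).mono_left
    (nhdsWithin_le_nhds (s := Ioi 0))
  have total := (mass.add energy).add boundary
  simp only [mul_zero, add_zero] at total
  refine total.congr' ?_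
  filter_upwards [self_mem_nhdsWithin] with ε hε
  rw [hΦ ε hε, mul_div_assoc (σ ^ 2 / 2), mul_assoc (σ ^ 2 / 2)]
end

section
/- Let θ > 0 and 0 < ν < 1, and define G(x) := ∫ₓ^∞ π_{ν,θ}(y)/y dy for x > 0. Then the asymptotic expansion G(x)/π_{ν,θ}(x) = 1/(1 − ν) + Γ(ν − 1)·(ν/θ)^{1−ν}·x^{1−ν} + o(x^{1−ν}) holds as x → 0⁺; precisely, x^{ν−1}·( G(x)/π_{ν,θ}(x) − 1/(1 − ν) ) tends to Γ(ν − 1)·(ν/θ)^{1−ν} as x tends to 0 from the right. -/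
open Real MeasureTheory Set Filter

/-!
With `t = ν x / θ`, the quotient `G(x) / π_{ν,θ}(x)` equals `e ^ t t ^ (1 - ν) Γ(ν - 1, t)`, where
`Γ(s, t)` is the upper incomplete Gamma function. The recurrence
`Γ(s + 1, t) = s Γ(s, t) + t ^ s e ^ (-t)` at `s = ν - 1` extracts the singular part of `Γ(s, t)`
and leaves the exact remainder `e ^ t Γ(s, t) + t ^ s / s = e ^ t Γ(s + 1, t) / s`, which tends to
`Γ(s + 1) / s = Γ(s)` because `s + 1 = ν > 0`.
-/

/-- The upper incomplete Gamma function `Γ(s, x)`, with the integrand written as in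
`Real.Gamma_eq_integral`; the integral converges for every real `s` once `x > 0`. -/
noncomputable def upperIncompleteGamma (s x : ℝ) : ℝ :=
  ∫ y in Ioi x, exp (-y) * y ^ (s - 1)

section UpperIncompleteGamma

variable {s x : ℝ}

theorem integrableOn_exp_neg_mul_rpow_Ioi (s : ℝ) (hx : 0 < x) :
    IntegrableOn (fun y : ℝ => exp (-y) * y ^ s) (Ioi x) := by
  refine integrable_of_isBigO_exp_neg one_half_pos ?_ (Gamma_integrand_isLittleO s).isBigO
  exact continuous_neg.rexp.continuousOn.mul
    (continuousOn_id.rpow_const fun y hy => Or.inl (hx.trans_le hy).ne')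

theorem hasDerivAt_exp_neg_mul_rpow (s : ℝ) (hx : x ≠ 0) :
    HasDerivAt (fun y : ℝ => exp (-y) * y ^ s)
      (s * (exp (-x) * x ^ (s - 1)) - exp (-x) * x ^ s) x := by
  refine ((hasDerivAt_neg x).exp.mul (hasDerivAt_rpow_const (Or.inl hx))).congr_deriv ?_
  ring

theorem tendsto_exp_neg_mul_rpow_atTop (s : ℝ) :
    Tendsto (fun y : ℝ => exp (-y) * y ^ s) atTop (nhds 0) := by
  simpa only [neg_one_mul, mul_comm (exp _)] using
    tendsto_rpow_mul_exp_neg_mul_atTop_nhds_zero s 1 one_pos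

theorem upperIncompleteGamma_add_one (s : ℝ) (hx : 0 < x) :
    upperIncompleteGamma (s + 1) x = s * upperIncompleteGamma s x + exp (-x) * x ^ s := by
  have integrable_left := (integrableOn_exp_neg_mul_rpow_Ioi (s - 1) hx).const_mul s
  have integrable_right := integrableOn_exp_neg_mul_rpow_Ioi s hx
  have integral_deriv := integral_Ioi_of_hasDerivAt_of_tendsto'
    (fun y hy => hasDerivAt_exp_neg_mul_rpow s (hx.trans_le hy).ne')
    (integrable_left.sub integrable_right) (tendsto_exp_neg_mul_rpow_atTop s)
  rw [integral_sub integrable_left integrable_right, integral_const_mul] at integral_deriv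
  simp only [upperIncompleteGamma, add_sub_cancel_right]
  linarith

theorem tendsto_upperIncompleteGamma_nhdsGT_zero (hs : 0 < s) :
    Tendsto (upperIncompleteGamma s) (nhdsWithin 0 (Ioi 0)) (nhds (Gamma s)) := by
  rw [Gamma_eq_integral hs]
  exact (GammaIntegral_convergent hs).continuousWithinAt_Ici_primitive_Ioi.mono_left
    (nhdsWithin_mono 0 Ioi_subset_Ici_self)

theorem exp_mul_upperIncompleteGamma_add_rpow_div (hs : s ≠ 0) (hx : 0 < x) :
    exp x * upperIncompleteGamma s x + x ^ s / s =
      exp x * upperIncompleteGamma (s + 1) x / s := by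
  have exp_cancel : exp x * exp (-x) = 1 := by rw [← exp_add, add_neg_cancel, exp_zero]
  rw [upperIncompleteGamma_add_one s hx, eq_div_iff hs, add_mul, div_mul_cancel₀ _ hs]
  linear_combination -x ^ s * exp_cancel

theorem tendsto_exp_mul_upperIncompleteGamma_add_rpow_div (hs : -1 < s) (hs0 : s ≠ 0) :
    Tendsto (fun x => exp x * upperIncompleteGamma s x + x ^ s / s)
      (nhdsWithin 0 (Ioi 0)) (nhds (Gamma s)) := by
  have exp_tendsto : Tendsto exp (nhdsWithin 0 (Ioi 0)) (nhds 1) :=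
    exp_zero ▸ (continuous_exp.tendsto 0).mono_left nhdsWithin_le_nhds
  have limit_eq : 1 * Gamma (s + 1) / s = Gamma s := by
    rw [Gamma_add_one hs0, one_mul, mul_div_cancel_left₀ _ hs0]
  rw [← limit_eq]
  refine ((exp_tendsto.mul (tendsto_upperIncompleteGamma_nhdsGT_zero
    (by linarith))).div_const s).congr' ?_
  filter_upwards [self_mem_nhdsWithin] with x hx
  exact (exp_mul_upperIncompleteGamma_add_rpow_div hs0 hx).symm

end UpperIncompleteGamma

section GammaDensity

variable {ν θ x : ℝ}

theorem piDens_eq_exp_mul_rpow (hrate : 0 < ν / θ) (hx : 0 ≤ x) :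
    piDens ν θ x =
      ν / θ / Gamma ν * (exp (-(ν / θ * x)) * (ν / θ * x) ^ (ν - 1)) := by
  have exponent_eq : -ν * x / θ = -(ν / θ * x) := by ring
  rw [piDens, exponent_eq, mul_rpow hrate.le hx, rpow_sub_one hrate.ne' ν]
  generalize ν / θ = rate at hrate ⊢
  field_simp

theorem piDens_div_eq_exp_mul_rpow (hrate : 0 < ν / θ) (hx : 0 < x) :
    piDens ν θ x / x =
      (ν / θ) ^ 2 / Gamma ν * (exp (-(ν / θ * x)) * (ν / θ * x) ^ (ν - 1 - 1)) := by
  rw [piDens_eq_exp_mul_rpow hrate hx.le, rpow_sub_one (mul_pos hrate hx).ne' (ν - 1)]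
  field_simp

theorem Gfun_eq_upperIncompleteGamma (hrate : 0 < ν / θ) (hx : 0 ≤ x) :
    Gfun ν θ x = ν / θ / Gamma ν * upperIncompleteGamma (ν - 1) (ν / θ * x) := by
  calc
    Gfun ν θ x = ∫ y in Ioi x,
        (ν / θ) ^ 2 / Gamma ν * (exp (-(ν / θ * y)) * (ν / θ * y) ^ (ν - 1 - 1)) :=
      setIntegral_congr_fun measurableSet_Ioi fun y hy =>
        piDens_div_eq_exp_mul_rpow hrate (hx.trans_lt hy)
    _ = (ν / θ) ^ 2 / Gamma ν *
        ((ν / θ)⁻¹ * upperIncompleteGamma (ν - 1) (ν / θ * x)) := by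
      rw [integral_const_mul,
        integral_comp_mul_left_Ioi (fun t => exp (-t) * t ^ (ν - 1 - 1)) x hrate,
        smul_eq_mul, upperIncompleteGamma]
    _ = ν / θ / Gamma ν * upperIncompleteGamma (ν - 1) (ν / θ * x) := by
      field_simp

theorem Gfun_div_piDens_eq (hν : 0 < ν) (hθ : 0 < θ) (hx : 0 ≤ x) :
    Gfun ν θ x / piDens ν θ x =
      exp (ν / θ * x) * upperIncompleteGamma (ν - 1) (ν / θ * x) / (ν / θ * x) ^ (ν - 1) := by
  have hrate : 0 < ν / θ := div_pos hν hθ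
  have const_ne_zero : ν / θ / Gamma ν ≠ 0 := (div_pos hrate (Gamma_pos_of_pos hν)).ne'
  rw [Gfun_eq_upperIncompleteGamma hrate hx, piDens_eq_exp_mul_rpow hrate hx,
    mul_div_mul_left _ _ const_ne_zero, exp_neg, div_mul_eq_div_div, div_inv_eq_mul,
    mul_comm (exp _)]

theorem rpow_mul_Gfun_div_piDens_sub (hν : 0 < ν) (hθ : 0 < θ) (hx : 0 < x) :
    x ^ (ν - 1) * (Gfun ν θ x / piDens ν θ x - 1 / (1 - ν)) =
      (exp (ν / θ * x) * upperIncompleteGamma (ν - 1) (ν / θ * x) +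
        (ν / θ * x) ^ (ν - 1) / (ν - 1)) * (ν / θ) ^ (1 - ν) := by
  have hrate : 0 < ν / θ := div_pos hν hθ
  have rpow_ne_zero : (ν / θ * x) ^ (ν - 1) ≠ 0 := (rpow_pos_of_pos (mul_pos hrate hx) _).ne'
  have rpow_eq : x ^ (ν - 1) = (ν / θ * x) ^ (ν - 1) * (ν / θ) ^ (1 - ν) := by
    rw [mul_rpow hrate.le hx.le, mul_right_comm, ← rpow_add hrate, sub_add_sub_cancel,
      sub_self, rpow_zero, one_mul]
  have inv_eq : 1 / (1 - ν) = -(1 / (ν - 1)) := by rw [← neg_sub ν 1, one_div_neg_eq_neg_one_div]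
  rw [Gfun_div_piDens_eq hν hθ hx.le, rpow_eq, inv_eq,
    sub_neg_eq_add, mul_right_comm, mul_add, mul_div_cancel₀ _ rpow_ne_zero, mul_one_div]

end GammaDensity

theorem Gfun_over_piDens_asymptotics_general (θ ν : ℝ) (hθ : 0 < θ)
    (hν0 : 0 < ν) (hν1 : ν ≠ 1) :
    Filter.Tendsto
      (fun x : ℝ => x ^ (ν - 1) * (Gfun ν θ x / piDens ν θ x - 1 / (1 - ν)))
      (nhdsWithin 0 (Set.Ioi 0))
      (nhds (Real.Gamma (ν - 1) * (ν / θ) ^ (1 - ν))) := by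
  have scaling : Tendsto (fun x => ν / θ * x) (nhdsWithin 0 (Ioi 0)) (nhdsWithin 0 (Ioi 0)) :=
    tendsto_iff_comap.mpr (comap_mulLeft_nhdsGT_zero (div_pos hν0 hθ)).ge
  have remainder := tendsto_exp_mul_upperIncompleteGamma_add_rpow_div
    (s := ν - 1) (by linarith) (sub_ne_zero.mpr hν1)
  refine ((remainder.comp scaling).mul_const ((ν / θ) ^ (1 - ν))).congr' ?_
  filter_upwards [self_mem_nhdsWithin] with x hx
  exact (rpow_mul_Gfun_div_piDens_sub hν0 hθ hx).symm

theorem Gfun_over_piDens_asymptotics (θ ν : ℝ) (hθ : 0 < θ)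
    (hν0 : 0 < ν) (hν1 : ν < 1) :
    Filter.Tendsto
      (fun x : ℝ => x ^ (ν - 1) * (Gfun ν θ x / piDens ν θ x - 1 / (1 - ν)))
      (nhdsWithin 0 (Set.Ioi 0))
      (nhds (Real.Gamma (ν - 1) * (ν / θ) ^ (1 - ν))) :=
  Gfun_over_piDens_asymptotics_general θ ν hθ hν0 hν1.ne
end

section
/- Let ν₁, ν₂ > 0, set Nᵢ := νᵢ^{νᵢ}/Γ(νᵢ), and for r > 0, s ∈ ℝ define x₁(r,s) := ((ν₁+ν₂)/(ν₁²+ν₂²))·(ν₁ r − ν₂ s) and x₂(r,s) := ((ν₁+ν₂)/(ν₁²+ν₂²))·(ν₂ r + ν₁ s). Set C₁ := ∫_{−ν₂/ν₁}^{ν₁/ν₂} x₁(1,y)^{ν₁−1}·x₂(1,y)^{ν₂−1} dy and C₂ := ∫_{−ν₂/ν₁}^{ν₁/ν₂} [ (ν₁²/(ν₁+ν₂)²)·x₁(1,y)^{ν₁}·x₂(1,y)^{ν₂−1} + (ν₂²/(ν₁+ν₂)²)·x₁(1,y)^{ν₁−1}·x₂(1,y)^{ν₂} ] dy (both finite and positive).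 Then for every c ≥ 0 and every continuously differentiable bounded function h : ℝ → ℝ with bounded derivative, the function f(x₁,x₂) := h( (ν₁ x₁ + ν₂ x₂)/(ν₁+ν₂) ) satisfies ∫∫_{(0,∞)²} π_{ν₁,1}(x₁)·π_{ν₂,1}(x₂)·[ x₁·(∂f/∂x₁)² + x₂·(∂f/∂x₂)² + c·f² ] dx₁ dx₂ = ((ν₁+ν₂)²/(ν₁²+ν₂²))·N₁·N₂·∫₀^∞ r^{ν₁+ν₂−1}·e^{−(ν₁+ν₂)r}·[ C₂·r·h'(r)² + c·C₁·h(r)² ] dr. -/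
open Real MeasureTheory Set

/-- First coordinate of the inverse linear change of variables. -/
noncomputable def x1c (ν₁ ν₂ r s : ℝ) : ℝ :=
  (ν₁ + ν₂) / (ν₁ ^ 2 + ν₂ ^ 2) * (ν₁ * r - ν₂ * s)

/-- Second coordinate of the inverse linear change of variables. -/
noncomputable def x2c (ν₁ ν₂ r s : ℝ) : ℝ :=
  (ν₁ + ν₂) / (ν₁ ^ 2 + ν₂ ^ 2) * (ν₂ * r + ν₁ * s)

/-- The constant `C₁`. -/
noncomputable def C1 (ν₁ ν₂ : ℝ) : ℝ :=
  ∫ y in (-(ν₂ / ν₁))..(ν₁ / ν₂),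
    x1c ν₁ ν₂ 1 y ^ (ν₁ - 1) * x2c ν₁ ν₂ 1 y ^ (ν₂ - 1)

/-- The constant `C₂`. -/
noncomputable def C2 (ν₁ ν₂ : ℝ) : ℝ :=
  ∫ y in (-(ν₂ / ν₁))..(ν₁ / ν₂),
    (ν₁ ^ 2 / (ν₁ + ν₂) ^ 2 * (x1c ν₁ ν₂ 1 y ^ ν₁ * x2c ν₁ ν₂ 1 y ^ (ν₂ - 1))
      + ν₂ ^ 2 / (ν₁ + ν₂) ^ 2
          * (x1c ν₁ ν₂ 1 y ^ (ν₁ - 1) * x2c ν₁ ν₂ 1 y ^ ν₂))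

/-!
In the coordinates `r = (ν₁ x₁ + ν₂ x₂) / (ν₁ + ν₂)` and `y = s / r`, where
`s = (ν₁ x₂ - ν₂ x₁) / (ν₁ + ν₂)`, the open quadrant is a product `(0, ∞) × (-ν₂/ν₁, ν₁/ν₂)` and the
Jacobian is `(ν₁ + ν₂)² / (ν₁² + ν₂²) * r`. The exponent `ν₁ x₁ + ν₂ x₂` depends on `r` alone and
`x₁`, `x₂` are homogeneous in `r`, so a function of the weighted mean integrated against
`x₁ ^ p * x₂ ^ q * exp (-(ν₁ x₁ + ν₂ x₂))` splits into a radial integral times an integral in `y`.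
The chain rule writes the Dirichlet form as a sum of three such integrals.
-/

theorem integrable_of_integrable_mul_prod {α β : Type*} [MeasurableSpace α] [MeasurableSpace β]
    {μ : Measure α} {ν : Measure β} [SFinite μ] [SFinite ν] [NeZero μ] {f : α → ℝ} {g : β → ℝ}
    (hf : ∀ᵐ x ∂μ, f x ≠ 0) (hfg : Integrable (fun z : α × β => f z.1 * g z.2) (μ.prod ν)) :
    Integrable g ν := by
  obtain ⟨x, hx, hxg⟩ := (hf.and hfg.prod_right_ae).exists
  exact (integrable_const_mul_iff (IsUnit.mk0 _ hx) _).1 hxg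

theorem integrableOn_rpow_mul_exp_neg_mul {p b : ℝ} (hp : -1 < p) (hb : 0 < b) :
    IntegrableOn (fun x : ℝ => x ^ p * exp (-b * x)) (Ioi 0) := by
  simpa only [rpow_one] using integrableOn_rpow_mul_exp_neg_mul_rpow hp one_pos hb

theorem integrableOn_rpow_mul_exp_neg_mul_mul_sq {p b M : ℝ} (hp : -1 < p) (hb : 0 < b)
    {f : ℝ → ℝ} (hf : AEStronglyMeasurable f (volume.restrict (Ioi 0))) (hM : ∀ x, |f x| ≤ M) :
    IntegrableOn (fun x => x ^ p * exp (-b * x) * f x ^ 2) (Ioi 0) := by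
  refine (integrableOn_rpow_mul_exp_neg_mul hp hb).mul_bdd (c := M ^ 2) (hf.pow 2) (.of_forall ?_)
  intro x
  rw [norm_pow]
  exact pow_le_pow_left₀ (norm_nonneg _) (hM x) 2

section RayChart

/-- The rays of the open quadrant, encoded by the slopes `y = s / r` along which both `x₁(r, s)`
and `x₂(r, s)` are positive. -/
def slopeInterval (ν₁ ν₂ : ℝ) : Set ℝ := Ioo (-(ν₂ / ν₁)) (ν₁ / ν₂)

/-- The parametrization `(r, y) ↦ (x₁(r, r y), x₂(r, r y))` of the open quadrant by the weighted
mean `r` and the slope `y`, written with the homogeneity of `x₁` and `x₂` built in. -/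
noncomputable def rayChart (ν₁ ν₂ : ℝ) (p : ℝ × ℝ) : ℝ × ℝ :=
  (p.1 * x1c ν₁ ν₂ 1 p.2, p.1 * x2c ν₁ ν₂ 1 p.2)

/-- The inverse of `rayChart`. -/
noncomputable def rayChartInv (ν₁ ν₂ : ℝ) (z : ℝ × ℝ) : ℝ × ℝ :=
  ((ν₁ * z.1 + ν₂ * z.2) / (ν₁ + ν₂), (ν₁ * z.2 - ν₂ * z.1) / (ν₁ * z.1 + ν₂ * z.2))

/-- The derivative of `rayChart`, see `hasFDerivAt_rayChart`. -/
noncomputable def fderivRayChart (ν₁ ν₂ : ℝ) (p : ℝ × ℝ) : ℝ × ℝ →L[ℝ] ℝ × ℝ :=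
  (Matrix.toLin (.finTwoProd ℝ) (.finTwoProd ℝ)
    !![x1c ν₁ ν₂ 1 p.2, p.1 * (-((ν₁ + ν₂) / (ν₁ ^ 2 + ν₂ ^ 2) * ν₂));
       x2c ν₁ ν₂ 1 p.2, p.1 * ((ν₁ + ν₂) / (ν₁ ^ 2 + ν₂ ^ 2) * ν₁)]).toContinuousLinearMap

variable {ν₁ ν₂ : ℝ}

theorem weighted_sum_x1c_x2c (hν : ν₁ ^ 2 + ν₂ ^ 2 ≠ 0) (r s : ℝ) :
    ν₁ * x1c ν₁ ν₂ r s + ν₂ * x2c ν₁ ν₂ r s = (ν₁ + ν₂) * r := by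
  simp only [x1c, x2c]
  field_simp
  ring

theorem weighted_diff_x1c_x2c (hν : ν₁ ^ 2 + ν₂ ^ 2 ≠ 0) (r s : ℝ) :
    ν₁ * x2c ν₁ ν₂ r s - ν₂ * x1c ν₁ ν₂ r s = (ν₁ + ν₂) * s := by
  simp only [x1c, x2c]
  field_simp
  ring

theorem weighted_sum_rayChart (hν : ν₁ ^ 2 + ν₂ ^ 2 ≠ 0) (p : ℝ × ℝ) :
    ν₁ * (rayChart ν₁ ν₂ p).1 + ν₂ * (rayChart ν₁ ν₂ p).2 = (ν₁ + ν₂) * p.1 := by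
  simp only [rayChart]
  linear_combination p.1 * weighted_sum_x1c_x2c hν 1 p.2

theorem weighted_diff_rayChart (hν : ν₁ ^ 2 + ν₂ ^ 2 ≠ 0) (p : ℝ × ℝ) :
    ν₁ * (rayChart ν₁ ν₂ p).2 - ν₂ * (rayChart ν₁ ν₂ p).1 = (ν₁ + ν₂) * (p.1 * p.2) := by
  simp only [rayChart]
  linear_combination p.1 * weighted_diff_x1c_x2c hν 1 p.2

theorem hasFDerivAt_rayChart (p : ℝ × ℝ) :
    HasFDerivAt (rayChart ν₁ ν₂) (fderivRayChart ν₁ ν₂ p) p := by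
  have hx1 : HasDerivAt (fun y => x1c ν₁ ν₂ 1 y)
      (-((ν₁ + ν₂) / (ν₁ ^ 2 + ν₂ ^ 2) * ν₂)) p.2 := by
    simpa [x1c] using (((hasDerivAt_id p.2).const_mul ν₂).const_sub (ν₁ * 1)).const_mul
      ((ν₁ + ν₂) / (ν₁ ^ 2 + ν₂ ^ 2))
  have hx2 : HasDerivAt (fun y => x2c ν₁ ν₂ 1 y) ((ν₁ + ν₂) / (ν₁ ^ 2 + ν₂ ^ 2) * ν₁) p.2 := by
    simpa [x2c] using (((hasDerivAt_id p.2).const_mul ν₁).const_add (ν₂ * 1)).const_mul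
      ((ν₁ + ν₂) / (ν₁ ^ 2 + ν₂ ^ 2))
  rw [fderivRayChart, Matrix.toLin_finTwoProd_toContinuousLinearMap]
  refine HasFDerivAt.congr_fderiv (HasFDerivAt.prodMk (𝕜 := ℝ)
    (hasFDerivAt_fst.mul (hx1.comp_hasFDerivAt p hasFDerivAt_snd))
    (hasFDerivAt_fst.mul (hx2.comp_hasFDerivAt p hasFDerivAt_snd))) ?_
  ext <;> simp

theorem det_fderivRayChart (hν : ν₁ ^ 2 + ν₂ ^ 2 ≠ 0) (p : ℝ × ℝ) :
    (fderivRayChart ν₁ ν₂ p).det = (ν₁ + ν₂) ^ 2 / (ν₁ ^ 2 + ν₂ ^ 2) * p.1 := by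
  simp only [fderivRayChart, LinearMap.det_toContinuousLinearMap, LinearMap.det_toLin,
    Matrix.det_fin_two_of]
  linear_combination
    p.1 * ((ν₁ + ν₂) / (ν₁ ^ 2 + ν₂ ^ 2)) * weighted_sum_x1c_x2c hν 1 p.2

theorem measurableSet_Ioi_prod_slopeInterval :
    MeasurableSet (Ioi (0 : ℝ) ×ˢ slopeInterval ν₁ ν₂) :=
  measurableSet_Ioi.prod measurableSet_Ioo

theorem mem_slopeInterval_iff (hν₁ : 0 < ν₁) (hν₂ : 0 < ν₂) {y : ℝ} :
    y ∈ slopeInterval ν₁ ν₂ ↔ 0 < x1c ν₁ ν₂ 1 y ∧ 0 < x2c ν₁ ν₂ 1 y := by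
  have hK : 0 < (ν₁ + ν₂) / (ν₁ ^ 2 + ν₂ ^ 2) := by positivity
  rw [slopeInterval, mem_Ioo, and_comm, x1c, x2c, mul_pos_iff_of_pos_left hK,
    mul_pos_iff_of_pos_left hK, lt_div_iff₀ hν₂, ← neg_div, div_lt_iff₀ hν₁]
  constructor <;> rintro ⟨h₁, h₂⟩ <;> constructor <;> linarith

theorem rayChartInv_rayChart (hν : ν₁ ^ 2 + ν₂ ^ 2 ≠ 0) (hs : ν₁ + ν₂ ≠ 0) {p : ℝ × ℝ}
    (hp : p.1 ≠ 0) : rayChartInv ν₁ ν₂ (rayChart ν₁ ν₂ p) = p := by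
  rw [rayChartInv, weighted_sum_rayChart hν, weighted_diff_rayChart hν]
  ext <;> field_simp

theorem rayChart_rayChartInv (hν : ν₁ ^ 2 + ν₂ ^ 2 ≠ 0) (hs : ν₁ + ν₂ ≠ 0) {z : ℝ × ℝ}
    (hz : ν₁ * z.1 + ν₂ * z.2 ≠ 0) : rayChart ν₁ ν₂ (rayChartInv ν₁ ν₂ z) = z := by
  ext <;> simp only [rayChart, rayChartInv, x1c, x2c] <;> field_simp <;> ring

theorem bijOn_rayChart (hν₁ : 0 < ν₁) (hν₂ : 0 < ν₂) :
    BijOn (rayChart ν₁ ν₂) (Ioi 0 ×ˢ slopeInterval ν₁ ν₂) (Ioi 0 ×ˢ Ioi 0) := by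
  have hν : ν₁ ^ 2 + ν₂ ^ 2 ≠ 0 := by positivity
  have hs : ν₁ + ν₂ ≠ 0 := by positivity
  have hmean {z : ℝ × ℝ} (hz : z ∈ Ioi (0 : ℝ) ×ˢ Ioi (0 : ℝ)) : 0 < ν₁ * z.1 + ν₂ * z.2 :=
    add_pos (mul_pos hν₁ hz.1) (mul_pos hν₂ hz.2)
  have hright {z : ℝ × ℝ} (hz : z ∈ Ioi (0 : ℝ) ×ˢ Ioi (0 : ℝ)) :=
    rayChart_rayChartInv hν hs (hmean hz).ne'
  refine InvOn.bijOn (f' := rayChartInv ν₁ ν₂)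
    ⟨fun p hp => rayChartInv_rayChart hν hs (ne_of_gt hp.1), fun z hz => hright hz⟩
    (fun p ⟨hr, hy⟩ => ?_) (fun z hz => ?_)
  · rw [mem_slopeInterval_iff hν₁ hν₂] at hy
    exact ⟨mul_pos hr hy.1, mul_pos hr hy.2⟩
  · have hr : 0 < (rayChartInv ν₁ ν₂ z).1 := div_pos (hmean hz) (add_pos hν₁ hν₂)
    refine ⟨hr, (mem_slopeInterval_iff hν₁ hν₂).2 ⟨?_, ?_⟩⟩
    · exact pos_of_mul_pos_right (hz.1.trans_eq (congrArg Prod.fst (hright hz)).symm) hr.le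
    · exact pos_of_mul_pos_right (hz.2.trans_eq (congrArg Prod.snd (hright hz)).symm) hr.le

variable {E : Type*} [NormedAddCommGroup E] [NormedSpace ℝ E]

theorem abs_det_fderivRayChart_smul_eqOn (hν : ν₁ ^ 2 + ν₂ ^ 2 ≠ 0) (f : ℝ × ℝ → E) :
    EqOn (fun p => |(fderivRayChart ν₁ ν₂ p).det| • f (rayChart ν₁ ν₂ p))
      (fun p => ((ν₁ + ν₂) ^ 2 / (ν₁ ^ 2 + ν₂ ^ 2) * p.1) • f (rayChart ν₁ ν₂ p))
      (Ioi 0 ×ˢ slopeInterval ν₁ ν₂) := by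
  rintro p ⟨hr : 0 < p.1, -⟩
  simp only [det_fderivRayChart hν]
  rw [abs_of_nonneg (by positivity)]

theorem integrableOn_quadrant_iff_rayChart (hν₁ : 0 < ν₁) (hν₂ : 0 < ν₂) (f : ℝ × ℝ → E) :
    IntegrableOn f (Ioi 0 ×ˢ Ioi 0) ↔
      IntegrableOn (fun p => ((ν₁ + ν₂) ^ 2 / (ν₁ ^ 2 + ν₂ ^ 2) * p.1) • f (rayChart ν₁ ν₂ p))
        (Ioi 0 ×ˢ slopeInterval ν₁ ν₂) := by
  have hbij := bijOn_rayChart hν₁ hν₂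
  rw [← hbij.image_eq, integrableOn_image_iff_integrableOn_abs_det_fderiv_smul volume
    measurableSet_Ioi_prod_slopeInterval (fun p _ => (hasFDerivAt_rayChart p).hasFDerivWithinAt)
    hbij.injOn]
  exact integrableOn_congr_fun (abs_det_fderivRayChart_smul_eqOn (by positivity) f)
    measurableSet_Ioi_prod_slopeInterval

theorem setIntegral_quadrant_eq_rayChart (hν₁ : 0 < ν₁) (hν₂ : 0 < ν₂) (f : ℝ × ℝ → E) :
    ∫ z in Ioi 0 ×ˢ Ioi 0, f z =
      ∫ p in Ioi 0 ×ˢ slopeInterval ν₁ ν₂,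
        ((ν₁ + ν₂) ^ 2 / (ν₁ ^ 2 + ν₂ ^ 2) * p.1) • f (rayChart ν₁ ν₂ p) := by
  have hbij := bijOn_rayChart hν₁ hν₂
  rw [← hbij.image_eq, integral_image_eq_integral_abs_det_fderiv_smul volume
    measurableSet_Ioi_prod_slopeInterval (fun p _ => (hasFDerivAt_rayChart p).hasFDerivWithinAt)
    hbij.injOn]
  exact setIntegral_congr_fun measurableSet_Ioi_prod_slopeInterval
    (abs_det_fderivRayChart_smul_eqOn (by positivity) f)

end RayChart

section GammaKernel

/-- A product of two unnormalized Gamma densities with rates `ν₁`, `ν₂` and exponents `p`, `q`,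
times a function `g` of the weighted mean. -/
noncomputable def gammaKernel (ν₁ ν₂ p q : ℝ) (g : ℝ → ℝ) (z : ℝ × ℝ) : ℝ :=
  z.1 ^ p * exp (-ν₁ * z.1) * (z.2 ^ q * exp (-ν₂ * z.2))
    * g ((ν₁ * z.1 + ν₂ * z.2) / (ν₁ + ν₂))

/-- The integral over `slopeInterval` that remains of `gammaKernel` once the weighted mean is
integrated out; `C1` and `C2` are combinations of these. -/
noncomputable def slopeMoment (ν₁ ν₂ p q : ℝ) : ℝ :=
  ∫ y in slopeInterval ν₁ ν₂, x1c ν₁ ν₂ 1 y ^ p * x2c ν₁ ν₂ 1 y ^ q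

variable {ν₁ ν₂ p q s : ℝ}

theorem jacobian_smul_gammaKernel_rayChart_eqOn (hν₁ : 0 < ν₁) (hν₂ : 0 < ν₂)
    (hpq : p + q + 1 = s) (g : ℝ → ℝ) :
    EqOn
      (fun z => ((ν₁ + ν₂) ^ 2 / (ν₁ ^ 2 + ν₂ ^ 2) * z.1) •
        gammaKernel ν₁ ν₂ p q g (rayChart ν₁ ν₂ z))
      (fun z => (ν₁ + ν₂) ^ 2 / (ν₁ ^ 2 + ν₂ ^ 2) *
        (z.1 ^ s * exp (-(ν₁ + ν₂) * z.1) * g z.1 *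
          (x1c ν₁ ν₂ 1 z.2 ^ p * x2c ν₁ ν₂ 1 z.2 ^ q)))
      (Ioi 0 ×ˢ slopeInterval ν₁ ν₂) := by
  rintro ⟨r, y⟩ ⟨hr : 0 < r, hy⟩
  obtain ⟨hx1, hx2⟩ := (mem_slopeInterval_iff hν₁ hν₂).1 hy
  have hsum := weighted_sum_rayChart (ν₁ := ν₁) (ν₂ := ν₂) (by positivity) (r, y)
  have hmean : (ν₁ * (rayChart ν₁ ν₂ (r, y)).1 + ν₂ * (rayChart ν₁ ν₂ (r, y)).2) / (ν₁ + ν₂)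
      = r := by
    rw [hsum, mul_div_cancel_left₀ _ (by positivity)]
  have hexp : exp (-(ν₁ + ν₂) * r) =
      exp (-ν₁ * (rayChart ν₁ ν₂ (r, y)).1) * exp (-ν₂ * (rayChart ν₁ ν₂ (r, y)).2) := by
    rw [← exp_add]
    congr 1
    linear_combination hsum
  have hpow : r ^ s = r ^ p * r ^ q * r := by
    rw [← hpq, rpow_add_one hr.ne', rpow_add hr]
  simp only [gammaKernel, hmean, hexp, hpow, smul_eq_mul]
  simp only [rayChart, mul_rpow hr.le hx1.le, mul_rpow hr.le hx2.le]
  ring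

theorem integrableOn_slopeMoment (hν₁ : 0 < ν₁) (hν₂ : 0 < ν₂) (hp : -1 < p) (hq : -1 < q) :
    IntegrableOn (fun y => x1c ν₁ ν₂ 1 y ^ p * x2c ν₁ ν₂ 1 y ^ q) (slopeInterval ν₁ ν₂) := by
  have hkernel : IntegrableOn (gammaKernel ν₁ ν₂ p q fun _ => 1) (Ioi 0 ×ˢ Ioi 0) := by
    rw [IntegrableOn, Measure.volume_eq_prod, ← Measure.prod_restrict]
    exact ((integrableOn_rpow_mul_exp_neg_mul hp hν₁).mul_prod
      (integrableOn_rpow_mul_exp_neg_mul hq hν₂)).congr (.of_forall fun _ => (mul_one _).symm)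
  rw [integrableOn_quadrant_iff_rayChart hν₁ hν₂, integrableOn_congr_fun
    (jacobian_smul_gammaKernel_rayChart_eqOn hν₁ hν₂ rfl _) measurableSet_Ioi_prod_slopeInterval,
    IntegrableOn, integrable_const_mul_iff (IsUnit.mk0 _ (by positivity)),
    Measure.volume_eq_prod, ← Measure.prod_restrict] at hkernel
  have : NeZero (volume.restrict (Ioi (0 : ℝ))) := ⟨by simp⟩
  refine integrable_of_integrable_mul_prod
    (f := fun r => r ^ (p + q + 1) * exp (-(ν₁ + ν₂) * r) * 1) ?_ hkernel
  filter_upwards [ae_restrict_mem measurableSet_Ioi] with r (hr : 0 < r)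
  positivity

theorem integrableOn_gammaKernel (hν₁ : 0 < ν₁) (hν₂ : 0 < ν₂) (hp : -1 < p) (hq : -1 < q)
    (hpq : p + q + 1 = s) {g : ℝ → ℝ}
    (hg : IntegrableOn (fun r => r ^ s * exp (-(ν₁ + ν₂) * r) * g r) (Ioi 0)) :
    IntegrableOn (gammaKernel ν₁ ν₂ p q g) (Ioi 0 ×ˢ Ioi 0) := by
  rw [integrableOn_quadrant_iff_rayChart hν₁ hν₂, integrableOn_congr_fun
    (jacobian_smul_gammaKernel_rayChart_eqOn hν₁ hν₂ hpq g) measurableSet_Ioi_prod_slopeInterval,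
    IntegrableOn, Measure.volume_eq_prod, ← Measure.prod_restrict]
  exact (hg.mul_prod (integrableOn_slopeMoment hν₁ hν₂ hp hq)).const_mul _

theorem setIntegral_gammaKernel (hν₁ : 0 < ν₁) (hν₂ : 0 < ν₂) (hpq : p + q + 1 = s)
    (g : ℝ → ℝ) :
    ∫ z in Ioi 0 ×ˢ Ioi 0, gammaKernel ν₁ ν₂ p q g z =
      (ν₁ + ν₂) ^ 2 / (ν₁ ^ 2 + ν₂ ^ 2) *
        ((∫ r in Ioi 0, r ^ s * exp (-(ν₁ + ν₂) * r) * g r) * slopeMoment ν₁ ν₂ p q) := by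
  rw [setIntegral_quadrant_eq_rayChart hν₁ hν₂, setIntegral_congr_fun
    measurableSet_Ioi_prod_slopeInterval (jacobian_smul_gammaKernel_rayChart_eqOn hν₁ hν₂ hpq g),
    integral_const_mul, Measure.volume_eq_prod]
  exact congrArg _ (setIntegral_prod_mul (fun r => r ^ s * exp (-(ν₁ + ν₂) * r) * g r)
    (fun y => x1c ν₁ ν₂ 1 y ^ p * x2c ν₁ ν₂ 1 y ^ q) _ _)

end GammaKernel

section DirichletKernel

/-- The density of the Dirichlet form, up to the normalizing constants of the two Gamma laws, with
`u` in place of `h'²` and `v` in place of `h²`. -/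
noncomputable def dirichletKernel (ν₁ ν₂ c : ℝ) (u v : ℝ → ℝ) (z : ℝ × ℝ) : ℝ :=
  ν₁ ^ 2 / (ν₁ + ν₂) ^ 2 * gammaKernel ν₁ ν₂ ν₁ (ν₂ - 1) u z
    + ν₂ ^ 2 / (ν₁ + ν₂) ^ 2 * gammaKernel ν₁ ν₂ (ν₁ - 1) ν₂ u z
    + c * gammaKernel ν₁ ν₂ (ν₁ - 1) (ν₂ - 1) v z

variable {ν₁ ν₂ : ℝ}

theorem intervalIntegral_eq_setIntegral_slopeInterval (hν₁ : 0 < ν₁) (hν₂ : 0 < ν₂) (f : ℝ → ℝ) :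
    ∫ y in (-(ν₂ / ν₁))..(ν₁ / ν₂), f y = ∫ y in slopeInterval ν₁ ν₂, f y := by
  have hle : -(ν₂ / ν₁) ≤ ν₁ / ν₂ :=
    (neg_nonpos.2 (div_pos hν₂ hν₁).le).trans (div_pos hν₁ hν₂).le
  rw [intervalIntegral.integral_of_le hle, integral_Ioc_eq_integral_Ioo, slopeInterval]

theorem C1_eq_slopeMoment (hν₁ : 0 < ν₁) (hν₂ : 0 < ν₂) :
    C1 ν₁ ν₂ = slopeMoment ν₁ ν₂ (ν₁ - 1) (ν₂ - 1) :=
  intervalIntegral_eq_setIntegral_slopeInterval hν₁ hν₂ _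

theorem C2_eq_slopeMoment (hν₁ : 0 < ν₁) (hν₂ : 0 < ν₂) :
    C2 ν₁ ν₂ = ν₁ ^ 2 / (ν₁ + ν₂) ^ 2 * slopeMoment ν₁ ν₂ ν₁ (ν₂ - 1)
      + ν₂ ^ 2 / (ν₁ + ν₂) ^ 2 * slopeMoment ν₁ ν₂ (ν₁ - 1) ν₂ := by
  have hint₁ := integrableOn_slopeMoment hν₁ hν₂ (p := ν₁) (q := ν₂ - 1)
    (by linarith) (by linarith)
  have hint₂ := integrableOn_slopeMoment hν₁ hν₂ (p := ν₁ - 1) (q := ν₂)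
    (by linarith) (by linarith)
  rw [C2, intervalIntegral_eq_setIntegral_slopeInterval hν₁ hν₂,
    integral_add (hint₁.const_mul _) (hint₂.const_mul _), integral_const_mul, integral_const_mul,
    slopeMoment, slopeMoment]

variable {u v : ℝ → ℝ}

theorem integrableOn_dirichletKernel (hν₁ : 0 < ν₁) (hν₂ : 0 < ν₂) (c : ℝ)
    (hu : IntegrableOn (fun r => r ^ (ν₁ + ν₂) * exp (-(ν₁ + ν₂) * r) * u r) (Ioi 0))
    (hv : IntegrableOn (fun r => r ^ (ν₁ + ν₂ - 1) * exp (-(ν₁ + ν₂) * r) * v r) (Ioi 0)) :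
    IntegrableOn (dirichletKernel ν₁ ν₂ c u v) (Ioi 0 ×ˢ Ioi 0) := by
  refine .add (.add (.const_mul ?_ _) (.const_mul ?_ _)) (.const_mul ?_ _)
  · exact integrableOn_gammaKernel hν₁ hν₂ (by linarith) (by linarith) (by ring) hu
  · exact integrableOn_gammaKernel hν₁ hν₂ (by linarith) (by linarith) (by ring) hu
  · exact integrableOn_gammaKernel hν₁ hν₂ (by linarith) (by linarith) (by ring) hv

theorem setIntegral_dirichletKernel (hν₁ : 0 < ν₁) (hν₂ : 0 < ν₂) (c : ℝ)
    (hu : IntegrableOn (fun r => r ^ (ν₁ + ν₂) * exp (-(ν₁ + ν₂) * r) * u r) (Ioi 0))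
    (hv : IntegrableOn (fun r => r ^ (ν₁ + ν₂ - 1) * exp (-(ν₁ + ν₂) * r) * v r) (Ioi 0)) :
    ∫ z in Ioi 0 ×ˢ Ioi 0, dirichletKernel ν₁ ν₂ c u v z =
      (ν₁ + ν₂) ^ 2 / (ν₁ ^ 2 + ν₂ ^ 2) *
        (C2 ν₁ ν₂ * (∫ r in Ioi 0, r ^ (ν₁ + ν₂) * exp (-(ν₁ + ν₂) * r) * u r)
          + c * C1 ν₁ ν₂ * ∫ r in Ioi 0, r ^ (ν₁ + ν₂ - 1) * exp (-(ν₁ + ν₂) * r) * v r) := by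
  have hexp₁ : ν₁ + (ν₂ - 1) + 1 = ν₁ + ν₂ := by ring
  have hexp₂ : ν₁ - 1 + ν₂ + 1 = ν₁ + ν₂ := by ring
  have hexp₃ : ν₁ - 1 + (ν₂ - 1) + 1 = ν₁ + ν₂ - 1 := by ring
  have hint₁ := (integrableOn_gammaKernel hν₁ hν₂ (by linarith) (by linarith) hexp₁ hu).const_mul
    (ν₁ ^ 2 / (ν₁ + ν₂) ^ 2)
  have hint₂ := (integrableOn_gammaKernel hν₁ hν₂ (by linarith) (by linarith) hexp₂ hu).const_mul
    (ν₂ ^ 2 / (ν₁ + ν₂) ^ 2)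
  have hint₃ := (integrableOn_gammaKernel hν₁ hν₂ (by linarith) (by linarith) hexp₃ hv).const_mul c
  simp only [dirichletKernel]
  rw [integral_add (hint₁.fun_add hint₂) hint₃, integral_add hint₁ hint₂, integral_const_mul,
    integral_const_mul, integral_const_mul, setIntegral_gammaKernel hν₁ hν₂ hexp₁,
    setIntegral_gammaKernel hν₁ hν₂ hexp₂, setIntegral_gammaKernel hν₁ hν₂ hexp₃,
    C1_eq_slopeMoment hν₁ hν₂, C2_eq_slopeMoment hν₁ hν₂]
  ring

theorem setIntegral_radial_energy {s b A B : ℝ}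
    (hu : IntegrableOn (fun r => r ^ s * exp (-b * r) * u r) (Ioi 0))
    (hv : IntegrableOn (fun r => r ^ (s - 1) * exp (-b * r) * v r) (Ioi 0)) :
    ∫ r in Ioi 0, r ^ (s - 1) * exp (-b * r) * (A * r * u r + B * v r) =
      A * (∫ r in Ioi 0, r ^ s * exp (-b * r) * u r)
        + B * ∫ r in Ioi 0, r ^ (s - 1) * exp (-b * r) * v r := by
  rw [← integral_const_mul, ← integral_const_mul,
    ← integral_add (hu.const_mul _) (hv.const_mul _)]
  refine setIntegral_congr_fun measurableSet_Ioi fun r (hr : 0 < r) => ?_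
  simp only [rpow_sub_one hr.ne']
  field_simp

theorem deriv_comp_weightedMean_left {h : ℝ → ℝ} {a b : ℝ}
    (hd : DifferentiableAt ℝ h ((ν₁ * a + ν₂ * b) / (ν₁ + ν₂))) :
    deriv (fun t => h ((ν₁ * t + ν₂ * b) / (ν₁ + ν₂))) a =
      deriv h ((ν₁ * a + ν₂ * b) / (ν₁ + ν₂)) * (ν₁ / (ν₁ + ν₂)) := by
  have hmean : HasDerivAt (fun t => (ν₁ * t + ν₂ * b) / (ν₁ + ν₂)) (ν₁ / (ν₁ + ν₂)) a := by
    simpa using (((hasDerivAt_id a).const_mul ν₁).add_const (ν₂ * b)).div_const (ν₁ + ν₂)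
  exact (hd.hasDerivAt.comp a hmean).deriv

theorem deriv_comp_weightedMean_right {h : ℝ → ℝ} {a b : ℝ}
    (hd : DifferentiableAt ℝ h ((ν₁ * a + ν₂ * b) / (ν₁ + ν₂))) :
    deriv (fun t => h ((ν₁ * a + ν₂ * t) / (ν₁ + ν₂))) b =
      deriv h ((ν₁ * a + ν₂ * b) / (ν₁ + ν₂)) * (ν₂ / (ν₁ + ν₂)) := by
  simp only [add_comm (ν₁ * a), add_comm ν₁] at hd ⊢
  exact deriv_comp_weightedMean_left hd

theorem piDens_mul_dirichlet_eq_dirichletKernel {h : ℝ → ℝ} {a b : ℝ} (c : ℝ) (ha : 0 < a)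
    (hb : 0 < b) (hd : DifferentiableAt ℝ h ((ν₁ * a + ν₂ * b) / (ν₁ + ν₂))) :
    piDens ν₁ 1 a * piDens ν₂ 1 b
        * (a * (deriv (fun t => h ((ν₁ * t + ν₂ * b) / (ν₁ + ν₂))) a) ^ 2
          + b * (deriv (fun t => h ((ν₁ * a + ν₂ * t) / (ν₁ + ν₂))) b) ^ 2
          + c * (h ((ν₁ * a + ν₂ * b) / (ν₁ + ν₂))) ^ 2) =
      (ν₁ ^ ν₁ / Real.Gamma ν₁) * (ν₂ ^ ν₂ / Real.Gamma ν₂) *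
        dirichletKernel ν₁ ν₂ c (fun r => deriv h r ^ 2) (fun r => h r ^ 2) (a, b) := by
  have hpow {x : ℝ} (hx : 0 < x) (ν : ℝ) : x ^ ν = x * x ^ (ν - 1) := by
    rw [rpow_sub_one hx.ne', mul_div_cancel₀ _ hx.ne']
  rw [deriv_comp_weightedMean_left hd, deriv_comp_weightedMean_right hd]
  simp only [dirichletKernel, gammaKernel, piDens, div_one, hpow ha ν₁, hpow hb ν₂, ← div_pow]
  ring

end DirichletKernel

theorem two_dim_dirichlet_form_reduction_general
    {ν₁ ν₂ : ℝ} (hν₁ : 0 < ν₁) (hν₂ : 0 < ν₂) (c : ℝ) {h : ℝ → ℝ}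
    (hd : DifferentiableOn ℝ h (Ioi 0))
    (henergy : IntegrableOn
      (fun r => r ^ (ν₁ + ν₂) * exp (-(ν₁ + ν₂) * r) * deriv h r ^ 2) (Ioi 0))
    (hsq : IntegrableOn
      (fun r => r ^ (ν₁ + ν₂ - 1) * exp (-(ν₁ + ν₂) * r) * h r ^ 2) (Ioi 0)) :
    (∫ a in Ioi (0 : ℝ), ∫ b in Ioi (0 : ℝ),
        piDens ν₁ 1 a * piDens ν₂ 1 b
          * (a * (deriv (fun t => h ((ν₁ * t + ν₂ * b) / (ν₁ + ν₂))) a) ^ 2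
            + b * (deriv (fun t => h ((ν₁ * a + ν₂ * t) / (ν₁ + ν₂))) b) ^ 2
            + c * (h ((ν₁ * a + ν₂ * b) / (ν₁ + ν₂))) ^ 2))
      = (ν₁ + ν₂) ^ 2 / (ν₁ ^ 2 + ν₂ ^ 2)
          * (ν₁ ^ ν₁ / Real.Gamma ν₁) * (ν₂ ^ ν₂ / Real.Gamma ν₂)
          * ∫ r in Ioi (0 : ℝ),
              r ^ (ν₁ + ν₂ - 1) * exp (-(ν₁ + ν₂) * r)
                * (C2 ν₁ ν₂ * r * (deriv h r) ^ 2 + c * C1 ν₁ ν₂ * (h r) ^ 2) := by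
  have hint := (integrableOn_dirichletKernel hν₁ hν₂ c henergy hsq).const_mul
    ((ν₁ ^ ν₁ / Real.Gamma ν₁) * (ν₂ ^ ν₂ / Real.Gamma ν₂))
  calc
    _ = ∫ a in Ioi (0 : ℝ), ∫ b in Ioi (0 : ℝ),
          (ν₁ ^ ν₁ / Real.Gamma ν₁) * (ν₂ ^ ν₂ / Real.Gamma ν₂) *
            dirichletKernel ν₁ ν₂ c (fun r => deriv h r ^ 2) (fun r => h r ^ 2) (a, b) :=
      setIntegral_congr_fun measurableSet_Ioi fun a (ha : 0 < a) =>
        setIntegral_congr_fun measurableSet_Ioi fun b (hb : 0 < b) =>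
          piDens_mul_dirichlet_eq_dirichletKernel c ha hb
            (hd.differentiableAt (Ioi_mem_nhds (by positivity)))
    _ = ∫ z in Ioi (0 : ℝ) ×ˢ Ioi (0 : ℝ),
          (ν₁ ^ ν₁ / Real.Gamma ν₁) * (ν₂ ^ ν₂ / Real.Gamma ν₂) *
            dirichletKernel ν₁ ν₂ c (fun r => deriv h r ^ 2) (fun r => h r ^ 2) z :=
      (setIntegral_prod _ hint).symm
    _ = _ := by
      rw [integral_const_mul, setIntegral_dirichletKernel hν₁ hν₂ c henergy hsq,
        setIntegral_radial_energy henergy hsq]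
      ring

theorem two_dim_dirichlet_form_reduction
    (ν₁ ν₂ : ℝ) (hν₁ : 0 < ν₁) (hν₂ : 0 < ν₂)
    (c : ℝ) (hc : 0 ≤ c)
    (h : ℝ → ℝ) (hh : ContDiff ℝ 1 h)
    (hb : ∃ M, ∀ x, |h x| ≤ M) (hb' : ∃ M, ∀ x, |deriv h x| ≤ M) :
    (∫ a in Set.Ioi (0:ℝ), ∫ b in Set.Ioi (0:ℝ),
        piDens ν₁ 1 a * piDens ν₂ 1 b
          * (a * (deriv (fun t => h ((ν₁ * t + ν₂ * b) / (ν₁ + ν₂))) a) ^ 2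
            + b * (deriv (fun t => h ((ν₁ * a + ν₂ * t) / (ν₁ + ν₂))) b) ^ 2
            + c * (h ((ν₁ * a + ν₂ * b) / (ν₁ + ν₂))) ^ 2))
      = (ν₁ + ν₂) ^ 2 / (ν₁ ^ 2 + ν₂ ^ 2)
          * (ν₁ ^ ν₁ / Real.Gamma ν₁) * (ν₂ ^ ν₂ / Real.Gamma ν₂)
          * ∫ r in Set.Ioi (0:ℝ),
              r ^ (ν₁ + ν₂ - 1) * Real.exp (-(ν₁ + ν₂) * r)
                * (C2 ν₁ ν₂ * r * (deriv h r) ^ 2 + c * C1 ν₁ ν₂ * (h r) ^ 2) := by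
  obtain ⟨M, hM⟩ := hb
  obtain ⟨M', hM'⟩ := hb'
  exact two_dim_dirichlet_form_reduction_general hν₁ hν₂ c
    (hh.differentiable one_ne_zero).differentiableOn
    (integrableOn_rpow_mul_exp_neg_mul_mul_sq (by linarith) (by positivity)
      (hh.continuous_deriv le_rfl).aestronglyMeasurable hM')
    (integrableOn_rpow_mul_exp_neg_mul_mul_sq (by linarith) (by positivity)
      hh.continuous.aestronglyMeasurable hM)
end
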